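/- arXiv:2306.12162 — 2 statements merged into one kernel-verified Lean document; each statement's English description precedes it below -/
import Mathlib

section
/- Let d : E → (0,∞) be a floppy graph metric with vertex set V, let xy ∈ [V]² \ E, and let r be a real number with (1/3)·ď(x,y) + (2/3)·d̂(x,y) ≤ r < d̂(x,y). Then the function D = d ∪ {⟨xy,r⟩} is a floppy graph metric. -/
open scoped Classical

universe u

namespace GraphMetricPaper

variable {X : Type u}

/-- The vertex set `V = ⋃ E` of a graph given by an adjacency relation `E`. -/
def Vtx (E : X → X → Prop) : Set X := {x | ∃ y, E x y}

/-- Two points are joined by a walk in the graph `E`. -/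
def Joined (E : X → X → Prop) (x y : X) : Prop :=
  ∃ (n : ℕ) (c : ℕ → X), c 0 = x ∧ c n = y ∧ ∀ i, i < n → E (c i) (c (i + 1))

/-- The set of weights of walks from `x` to `y`. -/
def walkSums (E : X → X → Prop) (d : X → X → ℝ) (x y : X) : Set ℝ :=
  {s | ∃ (n : ℕ) (c : ℕ → X), c 0 = x ∧ c n = y ∧ (∀ i, i < n → E (c i) (c (i + 1))) ∧
    s = ∑ i ∈ Finset.range n, d (c i) (c (i + 1))}

/-- The shortest-path pseudometric `d̂` determined by a weight function `d` on a graph `E`. -/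
noncomputable def hatd (E : X → X → Prop) (d : X → X → ℝ) (x y : X) : ℝ :=
  sInf (walkSums E d x y)

/-- The function `ď` bounding the possible extensions of `d` from below:
`ď(x,y) = sup_{ab ∈ E} max {0, d(ab) - d̂(a,x) - d̂(y,b)}`. -/
noncomputable def checkd (E : X → X → Prop) (d : X → X → ℝ) (x y : X) : ℝ :=
  sSup ({0} ∪ {r | ∃ a b, E a b ∧ r = d a b - hatd E d a x - hatd E d y b})

/-- The pseudometric `d̈` on doubletons:
`d̈(xy,uv) = min {d̂(x,u) + d̂(y,v), d̂(x,v) + d̂(y,u)}`. -/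
noncomputable def ddot (E : X → X → Prop) (d : X → X → ℝ) (x y u v : X) : ℝ :=
  min (hatd E d x u + hatd E d y v) (hatd E d x v + hatd E d y u)

/-- `d` is a graph pseudometric with edge relation `E`:  `E` is a (symmetric, irreflexive)
connected graph, `d` is a nonnegative symmetric weight on the edges, and `d = d̂` on edges. -/
structure IsGraphPseudometric (E : X → X → Prop) (d : X → X → ℝ) : Prop where
  symm : ∀ ⦃a b⦄, E a b → E b a
  irrefl : ∀ a, ¬ E a a
  wt_symm : ∀ ⦃a b⦄, E a b → d a b = d b a
  nonneg : ∀ ⦃a b⦄, E a b → 0 ≤ d a b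
  connected : ∀ x ∈ Vtx E, ∀ y ∈ Vtx E, Joined E x y
  edge_eq : ∀ ⦃a b⦄, E a b → d a b = hatd E d a b

/-- A graph metric is a graph pseudometric with strictly positive weights. -/
def IsGraphMetric (E : X → X → Prop) (d : X → X → ℝ) : Prop :=
  IsGraphPseudometric E d ∧ ∀ ⦃a b⦄, E a b → 0 < d a b

/-- A floppy graph pseudometric: `ď(x,y) < d̂(x,y)` for every `xy ∈ [V]² \ E`. -/
def FloppyPseudometric (E : X → X → Prop) (d : X → X → ℝ) : Prop :=
  IsGraphPseudometric E d ∧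
    ∀ x ∈ Vtx E, ∀ y ∈ Vtx E, x ≠ y → ¬ E x y → checkd E d x y < hatd E d x y

/-- A floppy graph metric: `ď(x,y) < d̂(x,y)` for every `xy ∈ [V]² \ E`. -/
def FloppyMetric (E : X → X → Prop) (d : X → X → ℝ) : Prop :=
  IsGraphMetric E d ∧
    ∀ x ∈ Vtx E, ∀ y ∈ Vtx E, x ≠ y → ¬ E x y → checkd E d x y < hatd E d x y

/-- The edge relation of the one-step extension `E ∪ {xy}`. -/
def extEdge (E : X → X → Prop) (x y : X) : X → X → Prop :=
  fun a b => E a b ∨ (a = x ∧ b = y) ∨ (a = y ∧ b = x)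

/-- The weight function of the one-step extension `d ∪ {⟨xy, r⟩}`. -/
noncomputable def extWt (d : X → X → ℝ) (x y : X) (r : ℝ) : X → X → ℝ :=
  fun a b => if (a = x ∧ b = y) ∨ (a = y ∧ b = x) then r else d a b

/-- The set `[V]² \ E` of unordered pairs of distinct vertices that are not edges. -/
def nonEdgePairs (E : X → X → Prop) : Set (Sym2 X) :=
  {e | ∃ a b : X, e = s(a, b) ∧ a ≠ b ∧ a ∈ Vtx E ∧ b ∈ Vtx E ∧ ¬ E a b}

/-- A set of (unordered) weighted pairs, presented as a relation `R`, is a full metric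
on `V`: it is symmetric, its domain is exactly `[V]²`, it is single-valued, positive,
and satisfies the triangle inequality. -/
def IsFullMetricRel (V : Set X) (R : X → X → ℝ → Prop) : Prop :=
  (∀ a b r, R a b r → R b a r) ∧
  (∀ a b r, R a b r → a ∈ V ∧ b ∈ V ∧ a ≠ b) ∧
  (∀ a b, a ∈ V → b ∈ V → a ≠ b → ∃ r, R a b r) ∧
  (∀ a b r s, R a b r → R a b s → r = s) ∧
  (∀ a b r, R a b r → 0 < r) ∧
  (∀ a b c r s t, R a b r → R b c s → R a c t → t ≤ r + s)

/-- A weight function `D` on `[V]²` is a full metric on `V`. -/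
def IsFullMetricOn (V : Set X) (D : X → X → ℝ) : Prop :=
  (∀ a b, a ∈ V → b ∈ V → a ≠ b → D a b = D b a) ∧
  (∀ a b, a ∈ V → b ∈ V → a ≠ b → 0 < D a b) ∧
  (∀ a b c, a ∈ V → b ∈ V → c ∈ V → a ≠ b → b ≠ c → a ≠ c → D a c ≤ D a b + D b c)

/-- Player I has a winning strategy in the metric-extending game `Game_d(lam, Fam)`:
there are functions `S1, S2` choosing, for each inning `β < lam` and each sequence of
previous answers of player II, a legal doubleton in `[V]²` and a set from `Fam`, such that
for every play of player II respecting the strategy, the resulting relation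
`d ∪ {⟨x_α y_α, r_α⟩ : α < lam}` is a full metric on `V`. -/
def WinningStratI (V : Set X) (E : X → X → Prop) (d : X → X → ℝ)
    (lam : Ordinal.{u}) (Fam : Set (Set ℝ)) : Prop :=
  ∃ (S1 : ∀ β : Ordinal.{u}, β < lam → (∀ α : Ordinal.{u}, α < β → ℝ) → X × X)
    (S2 : ∀ β : Ordinal.{u}, β < lam → (∀ α : Ordinal.{u}, α < β → ℝ) → Set ℝ),
    (∀ β hβ s, S2 β hβ s ∈ Fam) ∧
    (∀ β hβ s, (S1 β hβ s).1 ∈ V ∧ (S1 β hβ s).2 ∈ V ∧ (S1 β hβ s).1 ≠ (S1 β hβ s).2) ∧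
    (∀ s : ∀ α : Ordinal.{u}, α < lam → ℝ,
      (∀ α (hα : α < lam), s α hα ∈ S2 α hα (fun γ hγ => s γ (hγ.trans hα))) →
      IsFullMetricRel V (fun a b r =>
        (E a b ∧ r = d a b) ∨
        ∃ α, ∃ hα : α < lam,
          ((a = (S1 α hα (fun γ hγ => s γ (hγ.trans hα))).1 ∧
            b = (S1 α hα (fun γ hγ => s γ (hγ.trans hα))).2) ∨
           (a = (S1 α hα (fun γ hγ => s γ (hγ.trans hα))).2 ∧
            b = (S1 α hα (fun γ hγ => s γ (hγ.trans hα))).1)) ∧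
          r = s α hα))

/-- Player II has a winning strategy in the metric-extending game `Game_d(lam, Fam)`:
there is a function `T` assigning to each inning `β < lam` and each sequence of moves of
player I (of length `β + 1`) an answer in the set component of the last move, such that
for every legal play of player I, the resulting relation is not a full metric on `V`. -/
def WinningStratII (V : Set X) (E : X → X → Prop) (d : X → X → ℝ)
    (lam : Ordinal.{u}) (Fam : Set (Set ℝ)) : Prop :=
  ∃ T : ∀ β : Ordinal.{u}, β < lam → (∀ α : Ordinal.{u}, α ≤ β → (X × X) × Set ℝ) → ℝ,
    (∀ β hβ p, (p β le_rfl).2 ∈ Fam → T β hβ p ∈ (p β le_rfl).2) ∧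
    (∀ p : ∀ α : Ordinal.{u}, α < lam → (X × X) × Set ℝ,
      (∀ α hα, (p α hα).1.1 ∈ V ∧ (p α hα).1.2 ∈ V ∧ (p α hα).1.1 ≠ (p α hα).1.2 ∧
        (p α hα).2 ∈ Fam) →
      ¬ IsFullMetricRel V (fun a b r =>
        (E a b ∧ r = d a b) ∨
        ∃ α, ∃ hα : α < lam,
          ((a = (p α hα).1.1 ∧ b = (p α hα).1.2) ∨
           (a = (p α hα).1.2 ∧ b = (p α hα).1.1)) ∧
          r = T α hα (fun γ hγ => p γ (lt_of_le_of_lt hγ hα))))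

/-- The edge relation of the glued graph `E_d = E_p ∪ ⋃_{f ∈ F} E_f`. -/
def gluedEdge (Ep : X → X → Prop) (F : Set ((X → X → Prop) × (X → X → ℝ))) :
    X → X → Prop :=
  fun a b => Ep a b ∨ ∃ f ∈ F, f.1 a b

/-- `Λ(v; B) = inf {d̂(a,v) + d̂(v,b) - d̂(a,b) : a, b ∈ B}`. -/
noncomputable def Lam (E : X → X → Prop) (d : X → X → ℝ) (v : X) (B : Set X) : ℝ :=
  sInf {r | ∃ a ∈ B, ∃ b ∈ B, r = hatd E d a v + hatd E d v b - hatd E d a b}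

/-- The gluing setup: a graph pseudometric `p = (Ep, wp)` and a family `F` of graph
pseudometrics such that each member meets `V_p`, agrees with `p̂` on the intersection of
the vertex sets, and distinct members only meet inside `V_p`; `wd` is the glued weight
function `d = p ∪ ⋃ F` on `E_d = E_p ∪ ⋃_{f ∈ F} E_f`. -/
structure GluingSetup (Ep : X → X → Prop) (wp : X → X → ℝ)
    (F : Set ((X → X → Prop) × (X → X → ℝ))) (wd : X → X → ℝ) : Prop where
  hp : IsGraphPseudometric Ep wp
  hF : ∀ f ∈ F, IsGraphPseudometric f.1 f.2
  meet : ∀ f ∈ F, (Vtx f.1 ∩ Vtx Ep).Nonempty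
  agree : ∀ f ∈ F, ∀ x ∈ Vtx f.1 ∩ Vtx Ep, ∀ y ∈ Vtx f.1 ∩ Vtx Ep, x ≠ y →
    hatd f.1 f.2 x y = hatd Ep wp x y
  inter_sub : ∀ f ∈ F, ∀ g ∈ F, f ≠ g → Vtx f.1 ∩ Vtx g.1 ⊆ Vtx Ep
  wd_p : ∀ ⦃a b⦄, Ep a b → wd a b = wp a b
  wd_F : ∀ f ∈ F, ∀ ⦃a b⦄, f.1 a b → wd a b = f.2 a b

/-- A function whose increments along edges are bounded by the weights
has increments bounded by the shortest-path pseudometric. -/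
lemma sub_le_hatd {E : X → X → Prop} {d : X → X → ℝ} {g : X → ℝ}
    (hg : ∀ a b, E a b → g b ≤ g a + d a b) {u v : X} (huv : Joined E u v) :
    g v - g u ≤ hatd E d u v := by
  have walk_bound : ∀ (n : ℕ) (c : ℕ → X), (∀ i, i < n → E (c i) (c (i + 1))) →
      g (c n) ≤ g (c 0) + ∑ i ∈ Finset.range n, d (c i) (c (i + 1)) := by
    intro n c
    induction n with
    | zero => simp
    | succ n ih =>
      intro hc
      rw [Finset.sum_range_succ]
      linarith [ih fun i hi => hc i (by omega), hg _ _ (hc n (by omega))]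
  obtain ⟨n, c, h0, hn, hc⟩ := huv
  refine le_csInf ⟨_, n, c, h0, hn, hc, rfl⟩ ?_
  rintro s ⟨n, c, rfl, rfl, hc, rfl⟩
  linarith [walk_bound n c hc]

lemma walkSums_nonneg {E : X → X → Prop} {d : X → X → ℝ}
    (hd : ∀ a b, E a b → 0 ≤ d a b) {u v : X} {s : ℝ} (hs : s ∈ walkSums E d u v) : 0 ≤ s := by
  obtain ⟨n, c, -, -, hc, rfl⟩ := hs
  exact Finset.sum_nonneg fun i hi => hd _ _ (hc i (Finset.mem_range.mp hi))

lemma hatd_nonneg {E : X → X → Prop} {d : X → X → ℝ}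
    (hd : ∀ a b, E a b → 0 ≤ d a b) (u v : X) : 0 ≤ hatd E d u v :=
  Real.sInf_nonneg fun _ hs => walkSums_nonneg hd hs

lemma hatd_self {E : X → X → Prop} {d : X → X → ℝ}
    (hd : ∀ a b, E a b → 0 ≤ d a b) (u : X) : hatd E d u u = 0 :=
  le_antisymm
    (csInf_le ⟨0, fun _ hs => walkSums_nonneg hd hs⟩ ⟨0, fun _ => u, by simp⟩)
    (hatd_nonneg hd u u)

lemma hatd_le_add_hatd {E : X → X → Prop} {d : X → X → ℝ}
    (hd : ∀ a b, E a b → 0 ≤ d a b) {a b v : X} (hab : E a b) (hbv : Joined E b v) :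
    hatd E d a v ≤ d a b + hatd E d b v := by
  obtain ⟨n, c, h0, hn, hc⟩ := hbv
  rw [← sub_le_iff_le_add']
  refine le_csInf ⟨_, n, c, h0, hn, hc, rfl⟩ ?_
  rintro s ⟨n, c, rfl, rfl, hc, rfl⟩
  rw [sub_le_iff_le_add']
  refine csInf_le ⟨0, fun _ hs => walkSums_nonneg hd hs⟩
    ⟨n + 1, fun i => Nat.casesOn i a c, rfl, rfl, ?_, ?_⟩
  · rintro (_ | i) hi
    · exact hab
    · exact hc i (by omega)
  · rw [Finset.sum_range_succ', add_comm]
    rfl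

lemma joined_refl (E : X → X → Prop) (u : X) : Joined E u u :=
  ⟨0, fun _ => u, rfl, rfl, by simp⟩

lemma hatd_le_of_edge {E : X → X → Prop} {d : X → X → ℝ}
    (hd : ∀ a b, E a b → 0 ≤ d a b) {a b : X} (hab : E a b) : hatd E d a b ≤ d a b := by
  simpa [hatd_self hd] using hatd_le_add_hatd hd hab (joined_refl E b)

namespace IsGraphPseudometric

variable {E : X → X → Prop} {d : X → X → ℝ}

lemma mem_vtx (h : IsGraphPseudometric E d) {a b : X} (hab : E a b) :
    a ∈ Vtx E ∧ b ∈ Vtx E :=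
  ⟨⟨b, hab⟩, ⟨a, h.symm hab⟩⟩

lemma hatd_lipschitz (h : IsGraphPseudometric E d) {w : X} (hw : w ∈ Vtx E) :
    ∀ a b, E a b → hatd E d b w ≤ hatd E d a w + d a b := by
  intro a b hab
  rw [h.wt_symm hab, add_comm]
  exact hatd_le_add_hatd h.nonneg (h.symm hab) (h.connected _ (h.mem_vtx hab).1 _ hw)

lemma hatd_comm (h : IsGraphPseudometric E d) {u v : X} (hu : u ∈ Vtx E) (hv : v ∈ Vtx E) :
    hatd E d u v = hatd E d v u := by
  have key : ∀ u ∈ Vtx E, ∀ v ∈ Vtx E, hatd E d v u ≤ hatd E d u v := by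
    intro u hu v hv
    simpa [hatd_self h.nonneg] using sub_le_hatd (h.hatd_lipschitz hu) (h.connected u hu v hv)
  exact le_antisymm (key v hv u hu) (key u hu v hv)

lemma hatd_triangle (h : IsGraphPseudometric E d) {u v w : X} (hu : u ∈ Vtx E)
    (hv : v ∈ Vtx E) (hw : w ∈ Vtx E) : hatd E d u w ≤ hatd E d u v + hatd E d v w := by
  rw [h.hatd_comm hu hv, ← sub_le_iff_le_add]
  exact sub_le_hatd (h.hatd_lipschitz hw) (h.connected v hv u hu)

lemma checkd_bddAbove (h : IsGraphPseudometric E d) {x y : X} (hx : x ∈ Vtx E)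
    (hy : y ∈ Vtx E) :
    BddAbove ({0} ∪ {r | ∃ a b, E a b ∧ r = d a b - hatd E d a x - hatd E d y b}) := by
  refine ⟨hatd E d x y, ?_⟩
  rintro s (rfl | ⟨a, b, hab, rfl⟩)
  · exact hatd_nonneg h.nonneg x y
  · obtain ⟨ha, hb⟩ := h.mem_vtx hab
    rw [h.edge_eq hab]
    linarith [h.hatd_triangle ha hx hb, h.hatd_triangle hx hy hb]

lemma checkd_nonneg (h : IsGraphPseudometric E d) {x y : X} (hx : x ∈ Vtx E)
    (hy : y ∈ Vtx E) : 0 ≤ checkd E d x y :=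
  le_csSup (h.checkd_bddAbove hx hy) (Or.inl rfl)

lemma edge_le_checkd (h : IsGraphPseudometric E d) {x y a b : X} (hx : x ∈ Vtx E)
    (hy : y ∈ Vtx E) (hab : E a b) :
    d a b ≤ hatd E d a x + checkd E d x y + hatd E d y b := by
  have : d a b - hatd E d a x - hatd E d y b ≤ checkd E d x y :=
    le_csSup (h.checkd_bddAbove hx hy) (Or.inr ⟨a, b, hab, rfl⟩)
  linarith

end IsGraphPseudometric

lemma FloppyMetric.hatd_pos {E : X → X → Prop} {d : X → X → ℝ} (hd : FloppyMetric E d)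
    {u v : X} (hu : u ∈ Vtx E) (hv : v ∈ Vtx E) (huv : u ≠ v) : 0 < hatd E d u v := by
  by_cases hE : E u v
  · rw [← hd.1.1.edge_eq hE]
    exact hd.1.2 hE
  · exact (hd.1.1.checkd_nonneg hu hv).trans_lt (hd.2 u hu v hv huv hE)

section Extension

variable {E : X → X → Prop} {d : X → X → ℝ} {x y : X} {r : ℝ}

lemma extWt_of_edge (h : IsGraphPseudometric E d) (hnE : ¬ E x y) {a b : X} (hab : E a b) :
    extWt d x y r a b = d a b := by
  refine if_neg ?_
  rintro (⟨rfl, rfl⟩ | ⟨rfl, rfl⟩)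
  · exact hnE hab
  · exact hnE (h.symm hab)

lemma vtx_extEdge (hx : x ∈ Vtx E) (hy : y ∈ Vtx E) : Vtx (extEdge E x y) = Vtx E := by
  ext a
  constructor
  · rintro ⟨b, hab | ⟨rfl, -⟩ | ⟨rfl, -⟩⟩
    exacts [⟨b, hab⟩, hx, hy]
  · rintro ⟨b, hab⟩
    exact ⟨b, Or.inl hab⟩

/-- The shortest-path pseudometric of a one-step extension is bounded below
by that of a walk which uses the new edge at most once. -/
lemma le_hatd_ext (h : IsGraphPseudometric E d) (hx : x ∈ Vtx E) (hy : y ∈ Vtx E)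
    (hnE : ¬ E x y) (hr : 0 ≤ r) {u v : X} (hu : u ∈ Vtx E) (hv : v ∈ Vtx E) :
    hatd E d u v ≤ hatd (extEdge E x y) (extWt d x y r) u v ∨
    hatd E d u x + r + hatd E d y v ≤ hatd (extEdge E x y) (extWt d x y r) u v ∨
    hatd E d u y + r + hatd E d x v ≤ hatd (extEdge E x y) (extWt d x y r) u v := by
  let g : X → ℝ := fun w => min (hatd E d u w)
    (min (hatd E d u x + r + hatd E d y w) (hatd E d u y + r + hatd E d x w))
  have nn := hatd_nonneg h.nonneg
  have self := hatd_self h.nonneg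
  have hg : ∀ a b, extEdge E x y a b → g b ≤ g a + extWt d x y r a b := by
    rintro a b (hab | ⟨rfl, rfl⟩ | ⟨rfl, rfl⟩)
    · obtain ⟨ha, hb⟩ := h.mem_vtx hab
      have hE := h.edge_eq hab
      rw [extWt_of_edge h hnE hab]
      simp only [g, ← min_add_add_right]
      refine min_le_min ?_ (min_le_min ?_ ?_)
      · linarith [h.hatd_triangle hu ha hb]
      · linarith [h.hatd_triangle hy ha hb]
      · linarith [h.hatd_triangle hx ha hb]
    · have hw : extWt d a b r a b = r := by simp [extWt]
      rw [hw]
      simp only [g, ← min_add_add_right, self]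
      refine le_min ?_ (le_min ?_ ?_)
      · exact (min_le_right _ _).trans ((min_le_left _ _).trans (by linarith))
      · exact (min_le_right _ _).trans ((min_le_left _ _).trans (by linarith [nn b a]))
      · exact (min_le_left _ _).trans (by linarith)
    · have hw : extWt d b a r a b = r := by simp [extWt]
      rw [hw]
      simp only [g, ← min_add_add_right, self]
      refine le_min ?_ (le_min ?_ ?_)
      · exact (min_le_right _ _).trans ((min_le_right _ _).trans (by linarith))
      · exact (min_le_left _ _).trans (by linarith)
      · exact (min_le_right _ _).trans ((min_le_right _ _).trans (by linarith [nn b a]))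
  have hj : Joined (extEdge E x y) u v := by
    obtain ⟨n, c, h0, hn, hc⟩ := h.connected u hu v hv
    exact ⟨n, c, h0, hn, fun i hi => Or.inl (hc i hi)⟩
  have hgu : g u ≤ 0 := (min_le_left _ _).trans (self u).le
  have hgv : g v ≤ hatd (extEdge E x y) (extWt d x y r) u v := by
    linarith [sub_le_hatd hg hj]
  simpa only [g, min_le_iff] using hgv

lemma extWt_pos (hd : IsGraphMetric E d) (hnE : ¬ E x y) (hr : 0 < r) {a b : X}
    (hab : extEdge E x y a b) : 0 < extWt d x y r a b := by
  rcases hab with hab | hab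
  · rw [extWt_of_edge hd.1 hnE hab]
    exact hd.2 hab
  · rwa [extWt, if_pos hab]

lemma isGraphMetric_ext (hd : IsGraphMetric E d) (hx : x ∈ Vtx E) (hy : y ∈ Vtx E)
    (hxy : x ≠ y) (hnE : ¬ E x y) (hr : 0 < r) (hr₁ : checkd E d x y ≤ r)
    (hr₂ : r ≤ hatd E d x y) : IsGraphMetric (extEdge E x y) (extWt d x y r) := by
  have h := hd.1
  have nn := hatd_nonneg h.nonneg
  have nn' : ∀ a b, extEdge E x y a b → 0 ≤ extWt d x y r a b :=
    fun a b hab => (extWt_pos hd hnE hr hab).le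
  refine ⟨⟨?_, ?_, ?_, nn', ?_, ?_⟩, fun a b hab => extWt_pos hd hnE hr hab⟩
  · rintro a b (hab | hab | hab)
    exacts [Or.inl (h.symm hab), Or.inr (Or.inr hab.symm), Or.inr (Or.inl hab.symm)]
  · rintro a (ha | ⟨rfl, rfl⟩ | ⟨rfl, rfl⟩)
    exacts [h.irrefl a ha, hxy rfl, hxy rfl]
  · rintro a b (hab | hab)
    · rw [extWt_of_edge h hnE hab, extWt_of_edge h hnE (h.symm hab), h.wt_symm hab]
    · rw [extWt, extWt, if_pos hab, if_pos (by tauto)]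
  · rw [vtx_extEdge hx hy]
    intro u hu v hv
    obtain ⟨n, c, h0, hn, hc⟩ := h.connected u hu v hv
    exact ⟨n, c, h0, hn, fun i hi => Or.inl (hc i hi)⟩
  · intro a b hab
    refine le_antisymm ?_ (hatd_le_of_edge nn' hab)
    rcases hab with hab | hab
    · obtain ⟨ha, hb⟩ := h.mem_vtx hab
      rw [extWt_of_edge h hnE hab]
      rcases le_hatd_ext h hx hy hnE hr.le ha hb with H | H | H
      · exact (h.edge_eq hab).trans_le H
      · linarith [h.edge_le_checkd hx hy hab]
      · linarith [h.edge_le_checkd hx hy (h.symm hab), h.wt_symm hab, h.hatd_comm ha hy,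
          h.hatd_comm hx hb]
    · have hval : extWt d x y r a b = r := if_pos hab
      rw [hval]
      rcases hab with ⟨rfl, rfl⟩ | ⟨rfl, rfl⟩
      · rcases le_hatd_ext h hx hy hnE hr.le hx hy with H | H | H
        · linarith
        · linarith [nn a a, nn b b]
        · linarith [nn a b]
      · rcases le_hatd_ext h hx hy hnE hr.le hy hx with H | H | H
        · linarith [h.hatd_comm hx hy]
        · linarith [nn a b]
        · linarith [nn a a, nn b b]

/-- The new edge is strictly shorter than every detour through a different pair. -/
lemma lt_detour_ext (hd : FloppyMetric E d) (hx : x ∈ Vtx E) (hy : y ∈ Vtx E)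
    (hnE : ¬ E x y) (hr : 0 < r) (hr₂ : r < hatd E d x y) {u v : X} (hu : u ∈ Vtx E)
    (hv : v ∈ Vtx E) (huv : u ≠ v) (h₁ : ¬ (u = x ∧ v = y)) (h₂ : ¬ (u = y ∧ v = x)) :
    r < hatd (extEdge E x y) (extWt d x y r) x u +
      hatd (extEdge E x y) (extWt d x y r) u v + hatd (extEdge E x y) (extWt d x y r) v y := by
  have h := hd.1.1
  have nn := hatd_nonneg h.nonneg
  have nn' : ∀ p q, 0 ≤ hatd (extEdge E x y) (extWt d x y r) p q :=
    hatd_nonneg fun _ _ hab => (extWt_pos hd.1 hnE hr hab).le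
  have sep : ∀ p ∈ Vtx E, ∀ q ∈ Vtx E, ¬ (u = p ∧ v = q) →
      0 < hatd E d u p + hatd E d q v := by
    intro p hp q hq hpq
    by_cases hup : u = p
    · have := hd.hatd_pos hq hv fun hqv => hpq ⟨hup, hqv.symm⟩
      linarith [nn u p]
    · linarith [nn q v, hd.hatd_pos hu hp hup]
  rcases le_hatd_ext h hx hy hnE hr.le hu hv with H | H | H
  · have hpos := hd.hatd_pos hu hv huv
    rcases le_hatd_ext h hx hy hnE hr.le hx hu with H₁ | H₁ | H₁
    · rcases le_hatd_ext h hx hy hnE hr.le hv hy with H₂ | H₂ | H₂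
      · linarith [h.hatd_triangle hx hu hy, h.hatd_triangle hu hv hy]
      · linarith [nn' x u, nn v x, nn y y]
      · linarith [nn' x u, nn v y, nn x y]
    · linarith [nn' v y, nn x x, nn y u]
    · linarith [nn' v y, nn x y, nn x u]
  · linarith [sep x hx y hy h₁, nn' x u, nn' v y]
  · linarith [sep y hy x hx h₂, nn' x u, nn' v y]

/-- Old edges are shorter than detours in the extension, with a gap that does not
depend on the edge. -/
lemma edge_le_detour_ext (h : IsGraphPseudometric E d) (hx : x ∈ Vtx E) (hy : y ∈ Vtx E)
    (hnE : ¬ E x y) (hr : 0 ≤ r) {u v a b : X} (hu : u ∈ Vtx E) (hv : v ∈ Vtx E)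
    (hab : E a b) :
    d a b + min (r - checkd E d x y) (hatd E d u v - checkd E d u v) ≤
      hatd (extEdge E x y) (extWt d x y r) a u +
      hatd (extEdge E x y) (extWt d x y r) u v + hatd (extEdge E x y) (extWt d x y r) v b := by
  have nn := hatd_nonneg h.nonneg
  obtain ⟨ha, hb⟩ := h.mem_vtx hab
  have hc := h.checkd_nonneg hx hy
  have hmin₁ := min_le_left (r - checkd E d x y) (hatd E d u v - checkd E d u v)
  have hmin₂ := min_le_right (r - checkd E d x y) (hatd E d u v - checkd E d u v)
  have e₁ := h.edge_le_checkd hu hv hab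
  have e₂ := h.edge_le_checkd hx hy hab
  have e₃ : d a b ≤ hatd E d a y + checkd E d x y + hatd E d x b := by
    linarith [h.edge_le_checkd hx hy (h.symm hab), h.wt_symm hab, h.hatd_comm ha hy,
      h.hatd_comm hx hb]
  have e₄ := h.edge_eq hab
  have through : ∀ p ∈ Vtx E, hatd E d p v ≤ hatd E d p u + hatd E d u v ∧
      hatd E d p b ≤ hatd E d p v + hatd E d v b ∧
      hatd E d a p ≤ hatd E d a u + hatd E d u p ∧
      hatd E d u p ≤ hatd E d u v + hatd E d v p ∧
      hatd E d a b ≤ hatd E d a p + hatd E d p b := fun p hp =>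
    ⟨h.hatd_triangle hp hu hv, h.hatd_triangle hp hv hb, h.hatd_triangle ha hu hp,
      h.hatd_triangle hu hv hp, h.hatd_triangle ha hp hb⟩
  obtain ⟨x₁, x₂, x₃, x₄, x₅⟩ := through x hx
  obtain ⟨y₁, y₂, y₃, y₄, y₅⟩ := through y hy
  have := nn x u
  have := nn y u
  have := nn u x
  have := nn u y
  have := nn v x
  have := nn v y
  have := nn x v
  have := nn y v
  have := nn u v
  rcases le_hatd_ext h hx hy hnE hr ha hu with H₁ | H₁ | H₁ <;>
  rcases le_hatd_ext h hx hy hnE hr hu hv with H₂ | H₂ | H₂ <;>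
  rcases le_hatd_ext h hx hy hnE hr hv hb with H₃ | H₃ | H₃ <;>
  linarith

end Extension

/-- For every floppy graph metric `d`, every `xy ∈ [V]² \ E`, and every
real `r` with `(1/3)ď(x,y) + (2/3)d̂(x,y) ≤ r < d̂(x,y)`, the function `d ∪ {⟨xy, r⟩}`
is a floppy graph metric. -/
theorem floppy_one_step_extension (E : X → X → Prop) (d : X → X → ℝ)
    (hd : FloppyMetric E d) (x y : X) (hx : x ∈ Vtx E) (hy : y ∈ Vtx E)
    (hxy : x ≠ y) (hnE : ¬ E x y) (r : ℝ)
    (hr₁ : (1 / 3) * checkd E d x y + (2 / 3) * hatd E d x y ≤ r)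
    (hr₂ : r < hatd E d x y) :
    FloppyMetric (extEdge E x y) (extWt d x y r) := by
  have h := hd.1.1
  have hc := h.checkd_nonneg hx hy
  have hlt := hd.2 x hx y hy hxy hnE
  have hcr : checkd E d x y < r := by linarith
  have hr : 0 < r := hc.trans_lt hcr
  refine ⟨isGraphMetric_ext hd.1 hx hy hxy hnE hr hcr.le hr₂.le, ?_⟩
  rw [vtx_extEdge hx hy]
  intro u hu v hv huv hne
  obtain ⟨hnuv, h₁, h₂⟩ : ¬ E u v ∧ ¬ (u = x ∧ v = y) ∧ ¬ (u = y ∧ v = x) := by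
    simpa only [extEdge, not_or] using hne
  have hD := (isGraphMetric_ext hd.1 hx hy hxy hnE hr hcr.le hr₂.le).1
  set D := hatd (extEdge E x y) (extWt d x y r) with hDdef
  have hcomm : ∀ p ∈ Vtx E, ∀ q ∈ Vtx E, D p q = D q p := fun p hp q hq =>
    hD.hatd_comm (by rwa [vtx_extEdge hx hy]) (by rwa [vtx_extEdge hx hy])
  have hgap : 0 < min (r - checkd E d x y) (hatd E d u v - checkd E d u v) :=
    lt_min (by linarith) (by linarith [hd.2 u hu v hv huv hnuv])
  have hpos : 0 < D u v := by
    have nn := hatd_nonneg h.nonneg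
    rcases le_hatd_ext h hx hy hnE hr.le hu hv with H | H | H
    · exact (hd.hatd_pos hu hv huv).trans_le H
    · linarith [nn u x, nn y v]
    · linarith [nn u y, nn x v]
  have hxy₁ := lt_detour_ext hd hx hy hnE hr hr₂ hu hv huv h₁ h₂
  have hxy₂ := lt_detour_ext hd hx hy hnE hr hr₂ hv hu huv.symm
    (fun hh => h₂ hh.symm) (fun hh => h₁ hh.symm)
  rw [← hDdef] at hxy₁ hxy₂
  have hbound : checkd (extEdge E x y) (extWt d x y r) u v ≤
      max (max 0 (D u v - min (r - checkd E d x y) (hatd E d u v - checkd E d u v)))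
        (max (r - D x u - D v y) (r - D y u - D v x)) := by
    refine csSup_le ⟨0, Or.inl rfl⟩ ?_
    rintro s (rfl | ⟨a, b, hab | hab, rfl⟩)
    · exact (le_max_left _ _).trans (le_max_left _ _)
    · refine le_trans ?_ ((le_max_right _ _).trans (le_max_left _ _))
      rw [extWt_of_edge h hnE hab]
      linarith [edge_le_detour_ext h hx hy hnE hr.le hu hv hab]
    · have hval : extWt d x y r a b = r := if_pos hab
      rw [hval]
      rcases hab with ⟨rfl, rfl⟩ | ⟨rfl, rfl⟩
      · exact (le_max_left _ _).trans (le_max_right _ _)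
      · exact (le_max_right _ _).trans (le_max_right _ _)
  refine hbound.trans_lt (max_lt (max_lt hpos (by linarith)) (max_lt (by linarith) ?_))
  linarith [hcomm y hy u hu, hcomm v hv x hx, hcomm u hu v hv]

end GraphMetricPaper
end

section
/- Let d be a floppy graph metric with vertex set V and edge set E. Suppose the subspace [V]² \ E of the metric space ([V]², d̈) is not discrete, i.e., there exists p ∈ [V]² \ E such that for every ε > 0 there exists q ∈ [V]² \ E with q ≠ p and d̈(p,q) < ε. Then for every indexed family (F_e)_{e ∈ [V]² \ E} of subsets of ℝ each containing at least two elements, there exists a function r ∈ Π_{e ∈ [V]² \ E} F_e such that the set d ∪ r is not a full metric on V. -/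
open scoped Classical

universe u

namespace GraphMetricPaper

variable {X : Type u}

/-- The extension by zero to the diagonal of a weight function on doubletons. -/
noncomputable def zeroDiag (D : X → X → ℝ) (x y : X) : ℝ :=
  if x = y then 0 else D x y

namespace IsFullMetricOn

variable {V : Set X} {D : X → X → ℝ}

theorem zeroDiag_comm (h : IsFullMetricOn V D) {x y : X} (hx : x ∈ V) (hy : y ∈ V) :
    zeroDiag D x y = zeroDiag D y x := by
  by_cases hxy : x = y
  · rw [hxy]
  · simp [zeroDiag, hxy, Ne.symm hxy, h.1 x y hx hy hxy]

theorem zeroDiag_nonneg (h : IsFullMetricOn V D) {x y : X} (hx : x ∈ V) (hy : y ∈ V) :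
    0 ≤ zeroDiag D x y := by
  by_cases hxy : x = y
  · simp [zeroDiag, hxy]
  · simpa [zeroDiag, hxy] using (h.2.1 x y hx hy hxy).le

theorem zeroDiag_triangle (h : IsFullMetricOn V D) {x y z : X} (hx : x ∈ V) (hy : y ∈ V)
    (hz : z ∈ V) : zeroDiag D x z ≤ zeroDiag D x y + zeroDiag D y z := by
  by_cases hxz : x = z
  · have h₁ := h.zeroDiag_nonneg hx hy
    have h₂ := h.zeroDiag_nonneg hy hz
    have h₀ : zeroDiag D x z = 0 := by simp [zeroDiag, hxz]
    linarith
  by_cases hxy : x = y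
  · simp [zeroDiag, hxy]
  by_cases hyz : y = z
  · simp [zeroDiag, hyz]
  simpa [zeroDiag, hxy, hyz, hxz] using h.2.2 x y z hx hy hz hxy hyz hxz

variable {E : X → X → Prop} {d : X → X → ℝ}

/-- A full metric extending a graph pseudometric is bounded by the shortest-path
pseudometric. -/
theorem zeroDiag_le_hatd (h : IsFullMetricOn (Vtx E) D) (hd : IsGraphPseudometric E d)
    (hext : ∀ a b, E a b → D a b = d a b) {x y : X} (hx : x ∈ Vtx E) (hy : y ∈ Vtx E) :
    zeroDiag D x y ≤ hatd E d x y := by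
  obtain ⟨n, c, h0, hn, hc⟩ := hd.connected x hx y hy
  refine le_csInf ⟨_, n, c, h0, hn, hc, rfl⟩ ?_
  rintro _ ⟨n, c, rfl, rfl, hc, rfl⟩
  have hprefix : ∀ m ≤ n, c m ∈ Vtx E ∧
      zeroDiag D (c 0) (c m) ≤ ∑ i ∈ Finset.range m, d (c i) (c (i + 1)) := by
    intro m
    induction m with
    | zero => exact fun _ => ⟨hx, by simp [zeroDiag]⟩
    | succ m ih =>
      intro hm
      obtain ⟨hmem, hle⟩ := ih (by omega)
      have hedge := hc m (by omega)
      have hmem' : c (m + 1) ∈ Vtx E := ⟨c m, hd.symm hedge⟩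
      have hne : c m ≠ c (m + 1) := fun heq => hd.irrefl (c m) (by rwa [← heq] at hedge)
      have hstep : zeroDiag D (c m) (c (m + 1)) = d (c m) (c (m + 1)) := by
        rw [zeroDiag, if_neg hne, hext _ _ hedge]
      refine ⟨hmem', ?_⟩
      rw [Finset.sum_range_succ]
      have := h.zeroDiag_triangle hx hmem hmem'
      linarith
  exact (hprefix n le_rfl).2

theorem abs_sub_le_hatd_add_hatd (h : IsFullMetricOn (Vtx E) D) (hd : IsGraphPseudometric E d)
    (hext : ∀ a b, E a b → D a b = d a b) {x y u v : X} (hx : x ∈ Vtx E) (hy : y ∈ Vtx E)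
    (hu : u ∈ Vtx E) (hv : v ∈ Vtx E) :
    |zeroDiag D x y - zeroDiag D u v| ≤ hatd E d x u + hatd E d y v := by
  have hxu := h.zeroDiag_le_hatd hd hext hx hu
  have hyv := h.zeroDiag_le_hatd hd hext hy hv
  have hux := h.zeroDiag_comm hu hx
  have hvy := h.zeroDiag_comm hv hy
  have h₁ := h.zeroDiag_triangle hx hu hy
  have h₂ := h.zeroDiag_triangle hu hv hy
  have h₃ := h.zeroDiag_triangle hu hx hv
  have h₄ := h.zeroDiag_triangle hx hy hv
  rw [abs_le]
  constructor <;> linarith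

/-- A full metric extending a graph pseudometric is non-expanding with respect to `d̈`. -/
theorem abs_sub_le_ddot (h : IsFullMetricOn (Vtx E) D) (hd : IsGraphPseudometric E d)
    (hext : ∀ a b, E a b → D a b = d a b) {x y u v : X} (hx : x ∈ Vtx E) (hy : y ∈ Vtx E)
    (hu : u ∈ Vtx E) (hv : v ∈ Vtx E) (hxy : x ≠ y) (huv : u ≠ v) :
    |D x y - D u v| ≤ ddot E d x y u v := by
  have h₁ := h.abs_sub_le_hatd_add_hatd hd hext hx hy hu hv
  have h₂ := h.abs_sub_le_hatd_add_hatd hd hext hx hy hv hu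
  rw [h.zeroDiag_comm hv hu] at h₂
  simp only [zeroDiag, if_neg hxy, if_neg huv] at h₁ h₂
  exact le_min h₁ h₂

end IsFullMetricOn

/-- If `d` is a floppy graph metric such that `[V]² \ E` is not a
discrete subspace of `([V]², d̈)`, then for every family of at least two-element sets
`F_e ⊆ ℝ` indexed by the non-edges, there is a selector `r` such that `d ∪ r` is not a
full metric on `V`. -/
theorem exists_selector_not_metric (E : X → X → Prop) (d : X → X → ℝ)
    (hd : FloppyMetric E d) (p₁ p₂ : X)
    (hp : p₁ ∈ Vtx E ∧ p₂ ∈ Vtx E ∧ p₁ ≠ p₂ ∧ ¬ E p₁ p₂)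
    (hnondiscrete : ∀ ε : ℝ, 0 < ε → ∃ q₁ q₂ : X,
      q₁ ∈ Vtx E ∧ q₂ ∈ Vtx E ∧ q₁ ≠ q₂ ∧ ¬ E q₁ q₂ ∧
      ¬ ((q₁ = p₁ ∧ q₂ = p₂) ∨ (q₁ = p₂ ∧ q₂ = p₁)) ∧
      ddot E d p₁ p₂ q₁ q₂ < ε)
    (F : X → X → Set ℝ)
    (hF : ∀ a b, a ∈ Vtx E → b ∈ Vtx E → a ≠ b → ¬ E a b →
      F a b = F b a ∧ ∃ s t : ℝ, s ∈ F a b ∧ t ∈ F a b ∧ s ≠ t) :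
    ∃ r : X → X → ℝ,
      (∀ a b, a ∈ Vtx E → b ∈ Vtx E → a ≠ b → ¬ E a b →
        r a b = r b a ∧ r a b ∈ F a b) ∧
      ¬ IsFullMetricOn (Vtx E) (fun a b => if E a b then d a b else r a b) := by
  obtain ⟨hp₁, hp₂, hpne, hpE⟩ := hp
  obtain ⟨-, s, t, hs, ht, hst⟩ := hF p₁ p₂ hp₁ hp₂ hpne hpE
  let base : X → X → ℝ := fun a b => Classical.epsilon fun x => x ∈ F a b
  have hsel : ∀ v ∈ F p₁ p₂, ∀ a b, a ∈ Vtx E → b ∈ Vtx E → a ≠ b → ¬ E a b →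
      extWt base p₁ p₂ v a b = extWt base p₁ p₂ v b a ∧ extWt base p₁ p₂ v a b ∈ F a b := by
    intro v hv a b ha hb hab hE
    obtain ⟨hsymm, w, -, hw, -, -⟩ := hF a b ha hb hab hE
    have hbase : base a b ∈ F a b := Classical.epsilon_spec (p := fun x => x ∈ F a b) ⟨w, hw⟩
    have hbase_symm : base a b = base b a := by simp only [base, hsymm]
    by_cases hpair : (a = p₁ ∧ b = p₂) ∨ (a = p₂ ∧ b = p₁)
    · rcases hpair with ⟨rfl, rfl⟩ | ⟨rfl, rfl⟩
      · simpa [extWt] using hv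
      · simpa [extWt, hsymm] using hv
    · have hpair' : ¬ ((b = p₁ ∧ a = p₂) ∨ (b = p₂ ∧ a = p₁)) := by tauto
      rw [extWt, extWt, if_neg hpair, if_neg hpair']
      exact ⟨hbase_symm, hbase⟩
  by_contra! hall
  obtain ⟨q₁, q₂, hq₁, hq₂, hqne, hqE, hqp, hclose⟩ :=
    hnondiscrete (|s - t| / 2) (half_pos (abs_pos.mpr (sub_ne_zero.mpr hst)))
  have hnear : ∀ v ∈ F p₁ p₂, |v - base q₁ q₂| ≤ ddot E d p₁ p₂ q₁ q₂ := by
    intro v hv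
    have := (hall (extWt base p₁ p₂ v) (hsel v hv)).abs_sub_le_ddot hd.1.1
      (fun a b hab => if_pos hab) hp₁ hp₂ hq₁ hq₂ hpne hqne
    simpa only [if_neg hpE, if_neg hqE, extWt, if_neg hqp, and_self, true_or, if_true] using this
  have h₁ := hnear s hs
  have h₂ := hnear t ht
  have h₃ := abs_sub_le s (base q₁ q₂) t
  rw [abs_sub_comm (base q₁ q₂) t] at h₃
  linarith

end GraphMetricPaper
end
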